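/- Let F be a finite field with q elements and let B₁,…,B_k ∈ F^{m×n} be a linearly independent family of matrices generating a column-nondegenerate matrix rank-metric code C = span_F{B₁,…,B_k}, with associated column-system S. For t ∈ {0,…,k} and r ∈ {0,…,n}, let A_r^{(t)}(C) denote the number of F-subspaces D ⊆ C with dim_F D = t and dim_F(Σ_{M∈D} rowsp(M)) = r. Then Σ_{r=0}^{n} A_r^{(t)}(C)·(q^{n−r} − 1) = Σ_{X ∈ S, X ≠ 0} N_t(k − rank(X)), where N_t(s) denotes the number of t-dimensional F-subspaces of F^s. -/

import Mathlib

open Matrix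

section Defs

variable {K : Type*} [Field K]

/-- The row space of a matrix: the span of its rows in `K^b`. -/
noncomputable def rowSpace {a b : ℕ} (M : Matrix (Fin a) (Fin b) K) :
    Submodule K (Fin b → K) :=
  Submodule.span K (Set.range fun i => M i)

/-- The column space of a matrix: the span of its columns in `K^a`. -/
noncomputable def colSpace {a b : ℕ} (M : Matrix (Fin a) (Fin b) K) :
    Submodule K (Fin a → K) :=
  Submodule.span K (Set.range fun j i => M i j)

/-- `Sc S U = {X ∈ S : colsp(X) ⊆ U}`, a subspace of the matrix space. -/
noncomputable def Sc {a b : ℕ} (S : Submodule K (Matrix (Fin a) (Fin b) K))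
    (U : Submodule K (Fin a → K)) : Submodule K (Matrix (Fin a) (Fin b) K) where
  carrier := {X | X ∈ S ∧ colSpace X ≤ U}
  add_mem' := by
    rintro X Y ⟨hXS, hXU⟩ ⟨hYS, hYU⟩
    refine ⟨S.add_mem hXS hYS, ?_⟩
    rw [colSpace, Submodule.span_le]
    rintro v ⟨j, rfl⟩
    have hx : (fun i => X i j) ∈ U := hXU (Submodule.subset_span ⟨j, rfl⟩)
    have hy : (fun i => Y i j) ∈ U := hYU (Submodule.subset_span ⟨j, rfl⟩)
    exact U.add_mem hx hy
  zero_mem' := by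
    refine ⟨S.zero_mem, ?_⟩
    rw [colSpace, Submodule.span_le]
    rintro v ⟨j, rfl⟩
    exact U.zero_mem
  smul_mem' := by
    rintro c X ⟨hXS, hXU⟩
    refine ⟨S.smul_mem c hXS, ?_⟩
    rw [colSpace, Submodule.span_le]
    rintro v ⟨j, rfl⟩
    exact U.smul_mem c (hXU (Submodule.subset_span ⟨j, rfl⟩))

/-- `Sr S U = {X ∈ S : rowsp(X) ⊆ U}`, a subspace of the matrix space. -/
noncomputable def Sr {a b : ℕ} (S : Submodule K (Matrix (Fin a) (Fin b) K))
    (U : Submodule K (Fin b → K)) : Submodule K (Matrix (Fin a) (Fin b) K) where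
  carrier := {X | X ∈ S ∧ rowSpace X ≤ U}
  add_mem' := by
    rintro X Y ⟨hXS, hXU⟩ ⟨hYS, hYU⟩
    refine ⟨S.add_mem hXS hYS, ?_⟩
    rw [rowSpace, Submodule.span_le]
    rintro v ⟨i, rfl⟩
    have hx : X i ∈ U := hXU (Submodule.subset_span ⟨i, rfl⟩)
    have hy : Y i ∈ U := hYU (Submodule.subset_span ⟨i, rfl⟩)
    exact U.add_mem hx hy
  zero_mem' := by
    refine ⟨S.zero_mem, ?_⟩
    rw [rowSpace, Submodule.span_le]
    rintro v ⟨i, rfl⟩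
    exact U.zero_mem
  smul_mem' := by
    rintro c X ⟨hXS, hXU⟩
    refine ⟨S.smul_mem c hXS, ?_⟩
    rw [rowSpace, Submodule.span_le]
    rintro v ⟨i, rfl⟩
    exact U.smul_mem c (hXU (Submodule.subset_span ⟨i, rfl⟩))

/-- Row support of a set of matrices: the sum of the row spaces of its elements. -/
noncomputable def rowSupport {a b : ℕ} (D : Submodule K (Matrix (Fin a) (Fin b) K)) :
    Submodule K (Fin b → K) :=
  ⨆ M ∈ D, rowSpace M

/-- Column support of a set of matrices: the sum of the column spaces of its elements. -/
noncomputable def colSupport {a b : ℕ} (D : Submodule K (Matrix (Fin a) (Fin b) K)) :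
    Submodule K (Fin a → K) :=
  ⨆ M ∈ D, colSpace M

/-- The hyperplane `u^⊥ = {v : ∑ i, u i * v i = 0}`. -/
noncomputable def perp {a : ℕ} (u : Fin a → K) : Submodule K (Fin a → K) where
  carrier := {v | ∑ i, u i * v i = 0}
  add_mem' := by
    intro v w hv hw
    simp only [Set.mem_setOf_eq, Pi.add_apply, mul_add, Finset.sum_add_distrib] at *
    simp [hv, hw]
  zero_mem' := by simp
  smul_mem' := by
    intro c v hv
    simp only [Set.mem_setOf_eq, Pi.smul_apply, smul_eq_mul] at *
    have : ∑ i, u i * (c * v i) = c * ∑ i, u i * v i := by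
      rw [Finset.mul_sum]; congr 1; ext i; ring
    simp [this, hv]

/-- The orthogonal complement `U^⊥ = {v : ∀ u ∈ U, ∑ i, u i * v i = 0}`. -/
noncomputable def perpSub {a : ℕ} (U : Submodule K (Fin a → K)) : Submodule K (Fin a → K) :=
  ⨅ u ∈ U, perp u

/-- The slices of the column-system: `(X l) i j = (B i) j l`. -/
def colSlices {m n k : ℕ} (B : Fin k → Matrix (Fin m) (Fin n) K) :
    Fin n → Matrix (Fin k) (Fin m) K :=
  fun l => Matrix.of fun i j => B i j l

/-- The slices of the row-system: `(Y j) l i = (B i) j l`. -/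
def rowSlices {m n k : ℕ} (B : Fin k → Matrix (Fin m) (Fin n) K) :
    Fin m → Matrix (Fin n) (Fin k) K :=
  fun j => Matrix.of fun l i => B i j l

/-- The linear map `u ↦ ∑ i, u i • B i` (i.e. `u ↦ m₁(T,u)`). -/
noncomputable def combMap {m n k : ℕ} (B : Fin k → Matrix (Fin m) (Fin n) K) :
    (Fin k → K) →ₗ[K] Matrix (Fin m) (Fin n) K where
  toFun u := ∑ i, u i • B i
  map_add' := by intro u v; simp [add_smul, Finset.sum_add_distrib]
  map_smul' := by intro c u; simp [smul_smul, Finset.smul_sum]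

/-- The `t`-th row-generalized rank weight. -/
noncomputable def dRow {a b : ℕ} (C : Submodule K (Matrix (Fin a) (Fin b) K)) (t : ℕ) : ℕ :=
  sInf {r | ∃ D : Submodule K (Matrix (Fin a) (Fin b) K),
    D ≤ C ∧ Module.finrank K D = t ∧ Module.finrank K (rowSupport D) = r}

/-- The `t`-th column-generalized rank weight. -/
noncomputable def dCol {a b : ℕ} (C : Submodule K (Matrix (Fin a) (Fin b) K)) (t : ℕ) : ℕ :=
  sInf {r | ∃ D : Submodule K (Matrix (Fin a) (Fin b) K),
    D ≤ C ∧ Module.finrank K D = t ∧ Module.finrank K (colSupport D) = r}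

end Defs

/-!
Count the pairs `(D, v)` in which `D` is a `t`-dimensional subcode of `C` and `v ≠ 0` is orthogonal
to the row support of `D`. A fixed `D` with row support of dimension `r` lies in `q ^ (n - r) - 1`
pairs. A fixed `v` lies in as many pairs as there are `t`-dimensional subspaces of
`{M ∈ C | M *ᵥ v = 0}`. Writing `M = ∑ i, u i • B i` and `X = ∑ l, v l • X_l`, where the `X_l` are
the slices of the column-system, one has `M *ᵥ v = u ᵥ* X`, so this space is the left kernel of `X`
and has dimension `k - rank X`. The same formula shows that `v ↦ X` has kernel the orthogonal
complement of the row support of `C`, so for a column-nondegenerate code `X` runs through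
`S \ {0}` exactly once as `v` runs through the nonzero vectors.
-/

section Delsarte

open Module Finset

section Counting

variable {ι κ R : Type*}

theorem sum_natCard_fiber_mul [Fintype ι] [Semiring R] {p : ι → Prop} [DecidablePred p]
    {s : Finset κ} {g : ι → κ} (hg : ∀ i, p i → g i ∈ s) (f : κ → R) :
    ∑ j ∈ s, (Nat.card {i // p i ∧ g i = j} : R) * f j = ∑ i with p i, f (g i) := by
  classical
  have hmaps : ∀ i ∈ ({i | p i} : Finset ι), g i ∈ s := fun i hi => hg i (mem_filter.1 hi).2
  rw [← sum_fiberwise_of_maps_to' hmaps]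
  refine sum_congr rfl fun j _ => ?_
  have hcard : Nat.card {i // p i ∧ g i = j} = #{i | p i ∧ g i = j} :=
    Nat.subtype_card _ fun i => mem_filter_univ i
  rw [sum_const, nsmul_eq_mul, filter_filter, hcard]

theorem card_ne_zero_and_mem {K V : Type*} [Field K] [Fintype K] [AddCommGroup V] [Module K V]
    [Fintype V] [DecidableEq V] (U : Submodule K V) [DecidablePred (· ∈ U)] :
    (#{v | v ≠ 0 ∧ v ∈ U} : ℤ) = (Fintype.card K : ℤ) ^ finrank K U - 1 := by
  have herase : ({v | v ≠ 0 ∧ v ∈ U} : Finset V) = ({v | v ∈ U} : Finset V).erase 0 := by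
    ext v
    simp
  have hcard : #{v | v ∈ U} = Fintype.card K ^ finrank K U :=
    (Fintype.card_subtype (· ∈ U)).symm.trans (card_eq_pow_finrank (K := K) (V := U))
  rw [herase, cast_card_erase_of_mem (by simp), hcard, Nat.cast_pow]

theorem finsum_mem_range_sdiff_zero {V W M : Type*} [Semiring R] [AddCommMonoid V] [Module R V]
    [AddCommMonoid W] [Module R W] [AddCommMonoid M] [Fintype V] [DecidableEq V]
    {f : V →ₗ[R] W} (hf : Function.Injective f) (g : W → M) :
    ∑ᶠ w ∈ (LinearMap.range f : Set W) \ {0}, g w = ∑ v with v ≠ 0, g (f v) := by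
  have himage : (LinearMap.range f : Set W) \ {0} = f '' ({v | v ≠ 0} : Finset V) := by
    ext w
    simp only [Set.mem_sdiff, SetLike.mem_coe, LinearMap.mem_range, Set.mem_singleton_iff,
      Set.mem_image, mem_filter_univ]
    constructor
    · rintro ⟨⟨v, rfl⟩, hv⟩
      exact ⟨v, (map_ne_zero_iff f hf).1 hv, rfl⟩
    · rintro ⟨v, hv, rfl⟩
      exact ⟨⟨v, rfl⟩, (map_ne_zero_iff f hf).2 hv⟩
  rw [himage, finsum_mem_image hf.injOn, finsum_mem_coe_finset]

end Counting

section SubspaceCount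

variable {R V W : Type*} [Semiring R] [AddCommMonoid V] [Module R V] [AddCommMonoid W] [Module R W]

/-- The number of `t`-dimensional subspaces of `V`, written `N_t(s)` for `V = F^s`; it is `0` when
there are infinitely many. -/
noncomputable def subspaceCount (R V : Type*) [Semiring R] [AddCommMonoid V] [Module R V]
    (t : ℕ) : ℕ :=
  Nat.card {U : Submodule R V // finrank R U = t}

theorem subspaceCount_congr (e : V ≃ₗ[R] W) (t : ℕ) :
    subspaceCount R V t = subspaceCount R W t :=
  Nat.card_congr ((Submodule.orderIsoMapComap e).toEquiv.subtypeEquiv fun U => by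
    rw [← e.finrank_map_eq U]
    rfl)

theorem subspaceCount_eq_subspaceCount_pi [StrongRankCondition R] [Module.Free R V]
    [Module.Finite R V] (t : ℕ) :
    subspaceCount R V t = subspaceCount R (Fin (finrank R V) → R) t :=
  subspaceCount_congr (finBasis R V).equivFun t

theorem subspaceCount_submodule (E : Submodule R V) (t : ℕ) :
    subspaceCount R E t = Nat.card {D : Submodule R V // D ≤ E ∧ finrank R D = t} := by
  let e : {U : Submodule R E // finrank R U = t} ≃ {D : Set.Iic E // finrank R D.1 = t} :=
    E.mapIic.toEquiv.subtypeEquiv fun U => by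
      rw [← Submodule.finrank_map_subtype_eq E U]
      rfl
  simp only [← Set.mem_Iic]
  exact Nat.card_congr
    (e.trans (Equiv.subtypeSubtypeEquivSubtypeInter (· ∈ Set.Iic E) (finrank R · = t)))

end SubspaceCount

variable {K : Type*} [Field K]

section Perp

variable {a : ℕ} {U : Submodule K (Fin a → K)} {v : Fin a → K}

theorem mem_perpSub : v ∈ perpSub U ↔ ∀ u ∈ U, u ⬝ᵥ v = 0 := by
  simp only [perpSub, Submodule.mem_iInf]
  rfl

theorem le_perp_iff_mem_perpSub : U ≤ perp v ↔ v ∈ perpSub U := by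
  rw [mem_perpSub]
  exact forall₂_congr fun u _ => by rw [dotProduct_comm]; rfl

theorem perpSub_eq_dualCoannihilator (U : Submodule K (Fin a → K)) :
    perpSub U = (U.map (dotProductEquiv K (Fin a)).toLinearMap).dualCoannihilator := by
  ext v
  simp only [mem_perpSub, Submodule.mem_dualCoannihilator, Submodule.mem_map,
    forall_exists_index, and_imp, forall_apply_eq_imp_iff₂]
  rfl

theorem perpSub_top : perpSub (⊤ : Submodule K (Fin a → K)) = ⊥ := by
  rw [perpSub_eq_dualCoannihilator, Submodule.map_top, LinearEquiv.range,
    Submodule.dualCoannihilator_top]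

theorem finrank_perpSub (U : Submodule K (Fin a → K)) :
    finrank K (perpSub U) = a - finrank K U := by
  have h := Subspace.finrank_add_finrank_dualCoannihilator_eq
    (U.map (dotProductEquiv K (Fin a)).toLinearMap)
  rw [LinearEquiv.finrank_map_eq, finrank_fin_fun] at h
  rw [perpSub_eq_dualCoannihilator]
  exact Nat.eq_sub_of_add_eq' h

end Perp

section RowSupport

variable {m n : ℕ} {C D : Submodule K (Matrix (Fin m) (Fin n) K)}

theorem rowSpace_le_perp_iff {M : Matrix (Fin m) (Fin n) K} {v : Fin n → K} :
    rowSpace M ≤ perp v ↔ M *ᵥ v = 0 := by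
  rw [rowSpace, Submodule.span_le, Set.range_subset_iff, funext_iff]
  exact forall_congr' fun i => by rw [mulVec, dotProduct_comm]; rfl

theorem mem_Sr_perp {M : Matrix (Fin m) (Fin n) K} {v : Fin n → K} :
    M ∈ Sr C (perp v) ↔ M ∈ C ∧ M *ᵥ v = 0 :=
  and_congr_right fun _ => rowSpace_le_perp_iff

theorem le_Sr_iff {U : Submodule K (Fin n → K)} : D ≤ Sr C U ↔ D ≤ C ∧ rowSupport D ≤ U := by
  rw [rowSupport, iSup₂_le_iff]
  exact forall₂_and

theorem le_Sr_perp_iff {v : Fin n → K} :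
    D ≤ Sr C (perp v) ↔ D ≤ C ∧ v ∈ perpSub (rowSupport D) := by
  rw [le_Sr_iff, le_perp_iff_mem_perpSub]

/-- The number `A_r^{(t)}(C)` of `t`-dimensional subcodes of `C` with row support of
dimension `r`. -/
noncomputable def subcodeCount (C : Submodule K (Matrix (Fin m) (Fin n) K)) (t r : ℕ) : ℕ :=
  Nat.card {D : Submodule K (Matrix (Fin m) (Fin n) K) //
    D ≤ C ∧ finrank K D = t ∧ finrank K (rowSupport D) = r}

theorem sum_subcodeCount_mul_pow_sub_one [Fintype K] [DecidableEq K]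
    (C : Submodule K (Matrix (Fin m) (Fin n) K)) (t : ℕ) :
    ∑ r ∈ range (n + 1), (subcodeCount C t r : ℤ) * ((Fintype.card K : ℤ) ^ (n - r) - 1)
      = ∑ v : Fin n → K with v ≠ 0, (subspaceCount K (Sr C (perp v)) t : ℤ) := by
  classical
  have : Fintype (Submodule K (Matrix (Fin m) (Fin n) K)) := Fintype.ofFinite _
  let orth (D : Submodule K (Matrix (Fin m) (Fin n) K)) (v : Fin n → K) : Prop :=
    v ∈ perpSub (rowSupport D)
  let subcodes : Finset (Submodule K (Matrix (Fin m) (Fin n) K)) := {D | D ≤ C ∧ finrank K D = t}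
  let nonzero : Finset (Fin n → K) := {v | v ≠ 0}
  have hrange (D : Submodule K (Matrix (Fin m) (Fin n) K)) :
      finrank K (rowSupport D) ∈ range (n + 1) :=
    mem_range_succ_iff.2 ((Submodule.finrank_le _).trans_eq (finrank_fin_fun K))
  have habove (D) : (#(nonzero.bipartiteAbove orth D) : ℤ)
      = (Fintype.card K : ℤ) ^ (n - finrank K (rowSupport D)) - 1 := by
    rw [bipartiteAbove, filter_filter, card_ne_zero_and_mem, finrank_perpSub]
  have hbelow (v) : #(subcodes.bipartiteBelow orth v) = subspaceCount K (Sr C (perp v)) t := by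
    rw [subspaceCount_submodule, bipartiteBelow, filter_filter]
    refine (Nat.subtype_card _ fun D => ?_).symm
    rw [mem_filter_univ, le_Sr_perp_iff, and_right_comm]
  calc
    _ = ∑ D ∈ subcodes, ((Fintype.card K : ℤ) ^ (n - finrank K (rowSupport D)) - 1) := by
      simp only [subcodeCount, ← and_assoc]
      exact sum_natCard_fiber_mul (fun D _ => hrange D) _
    _ = ∑ D ∈ subcodes, (#(nonzero.bipartiteAbove orth D) : ℤ) := by simp only [habove]
    _ = ∑ v ∈ nonzero, (#(subcodes.bipartiteBelow orth v) : ℤ) := by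
      exact_mod_cast sum_card_bipartiteAbove_eq_sum_card_bipartiteBelow orth
    _ = _ := by simp only [hbelow, nonzero]

end RowSupport

section LeftKernel

variable {l m : Type*} [Fintype l]

theorem vecMulLinear_eq_zero_iff {R : Type*} [Semiring R] {X : Matrix l m R} :
    X.vecMulLinear = 0 ↔ X = 0 := by
  classical
  exact map_eq_zero_iff Matrix.toLinearMapRight' (LinearEquiv.injective _)

theorem finrank_ker_vecMulLinear [Fintype m] (X : Matrix l m K) :
    finrank K (LinearMap.ker X.vecMulLinear) = Fintype.card l - X.rank := by
  have h := X.vecMulLinear.finrank_range_add_finrank_ker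
  rw [range_vecMulLinear, ← rank_eq_finrank_span_row, finrank_fintype_fun_eq_card] at h
  exact Nat.eq_sub_of_add_eq' h

end LeftKernel

section ColumnSystem

variable {m n k : ℕ} {B : Fin k → Matrix (Fin m) (Fin n) K}

theorem range_combMap (B : Fin k → Matrix (Fin m) (Fin n) K) :
    LinearMap.range (combMap B) = Submodule.span K (Set.range B) :=
  Fintype.range_linearCombination K B

theorem combMap_injective (hB : LinearIndependent K B) : Function.Injective (combMap B) :=
  hB.fintypeLinearCombination_injective

theorem combMap_mulVec (B : Fin k → Matrix (Fin m) (Fin n) K) (u : Fin k → K) (v : Fin n → K) :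
    combMap B u *ᵥ v = u ᵥ* combMap (colSlices B) v := by
  ext j
  calc
    _ = ∑ l, ∑ i, u i * B i j l * v l := by
      simp [combMap, mulVec, dotProduct, Matrix.sum_apply, sum_mul]
    _ = ∑ i, ∑ l, u i * B i j l * v l := sum_comm
    _ = _ := by
      simp [combMap, colSlices, vecMul, dotProduct, Matrix.sum_apply, mul_sum, mul_assoc,
        mul_comm (v _)]

theorem comap_combMap_Sr_perp (B : Fin k → Matrix (Fin m) (Fin n) K) (v : Fin n → K) :
    (Sr (Submodule.span K (Set.range B)) (perp v)).comap (combMap B)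
      = LinearMap.ker (combMap (colSlices B) v).vecMulLinear := by
  ext u
  rw [Submodule.mem_comap, mem_Sr_perp, ← range_combMap, combMap_mulVec, LinearMap.mem_ker,
    vecMulLinear_apply, and_iff_right (LinearMap.mem_range_self _ u)]

theorem ker_combMap_colSlices (B : Fin k → Matrix (Fin m) (Fin n) K) :
    LinearMap.ker (combMap (colSlices B))
      = perpSub (rowSupport (Submodule.span K (Set.range B))) := by
  ext v
  rw [LinearMap.mem_ker, ← vecMulLinear_eq_zero_iff, ← LinearMap.ker_eq_top,
    ← comap_combMap_Sr_perp, ← LinearMap.range_le_iff_comap, range_combMap, le_Sr_perp_iff,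
    and_iff_right le_rfl]

theorem combMap_colSlices_injective (hnd : rowSupport (Submodule.span K (Set.range B)) = ⊤) :
    Function.Injective (combMap (colSlices B)) := by
  rw [← LinearMap.ker_eq_bot, ker_combMap_colSlices, hnd, perpSub_top]

theorem finrank_Sr_perp (hB : LinearIndependent K B) (v : Fin n → K) :
    finrank K (Sr (Submodule.span K (Set.range B)) (perp v))
      = k - (combMap (colSlices B) v).rank := by
  set E := Sr (Submodule.span K (Set.range B)) (perp v) with hE
  have hle : E ≤ LinearMap.range (combMap B) := (range_combMap B).symm ▸ fun _ h => h.1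
  have e := Submodule.equivMapOfInjective (combMap B) (combMap_injective hB) (E.comap (combMap B))
  rw [← Submodule.map_comap_eq_self hle, ← e.finrank_eq, hE, comap_combMap_Sr_perp,
    finrank_ker_vecMulLinear, Fintype.card_fin]

theorem subspaceCount_Sr_perp (hB : LinearIndependent K B) (t : ℕ) (v : Fin n → K) :
    subspaceCount K (Sr (Submodule.span K (Set.range B)) (perp v)) t
      = subspaceCount K (Fin (k - (combMap (colSlices B) v).rank) → K) t := by
  rw [subspaceCount_eq_subspaceCount_pi, finrank_Sr_perp hB]

end ColumnSystem

end Delsarte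

/-- Higher-order Delsarte-type identities. For a column-nondegenerate
`[m×n,k]_q` code `C` with associated column-system `S` and any `t ≤ k`,
`Σ_{r=0}^{n} A_r^{(t)}(C)·(q^{n−r}−1) = Σ_{X ∈ S, X≠0} N_t(k − rk X)`, where `A_r^{(t)}(C)`
counts `t`-dimensional subcodes with row support of dimension `r`, and `N_t(s)` is the
number of `t`-dimensional subspaces of `F^s`. -/
theorem stmt3 {F : Type*} [Field F] [Fintype F] {m n k : ℕ}
    (hm : 0 < m) (hn : 0 < n) (hk : 0 < k)
    (q : ℕ) (hq : q = Fintype.card F)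
    (B : Fin k → Matrix (Fin m) (Fin n) F) (hB : LinearIndependent F B)
    (C : Submodule F (Matrix (Fin m) (Fin n) F))
    (hC : C = Submodule.span F (Set.range B))
    (hnd : rowSupport C = ⊤)
    (S : Submodule F (Matrix (Fin k) (Fin m) F))
    (hS : S = Submodule.span F (Set.range (colSlices B)))
    (t : ℕ) (ht : t ≤ k) :
    ∑ r ∈ Finset.range (n + 1),
        (Nat.card {D : Submodule F (Matrix (Fin m) (Fin n) F) //
            D ≤ C ∧ Module.finrank F D = t ∧ Module.finrank F (rowSupport D) = r} : ℤ)
          * ((q : ℤ) ^ (n - r) - 1)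
      = ∑ᶠ X ∈ (S : Set (Matrix (Fin k) (Fin m) F)) \ {0},
          (Nat.card {W : Submodule F (Fin (k - X.rank) → F) //
              Module.finrank F W = t} : ℤ) := by
  classical
  subst hq hC hS
  calc
    _ = ∑ v : Fin n → F with v ≠ 0,
          (subspaceCount F (Sr (Submodule.span F (Set.range B)) (perp v)) t : ℤ) :=
      sum_subcodeCount_mul_pow_sub_one _ t
    _ = ∑ v : Fin n → F with v ≠ 0,
          (subspaceCount F (Fin (k - (combMap (colSlices B) v).rank) → F) t : ℤ) := by
      simp only [subspaceCount_Sr_perp hB]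
    _ = _ := by
      rw [← range_combMap (colSlices B),
        finsum_mem_range_sdiff_zero (combMap_colSlices_injective hnd)]
      rfl
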